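/- Truncated inverse-eigenvalue sums: Let c_γ := (c+γ)/γ. For every S ∈ 𝒮_V with support L, every φ ∈ Ψ_{S,W} and every δ > 0: (i) ∑_{k=1}^m min(λ_k⁻¹, δ²)·‖P_L φ_k‖² ≤ (c_γ + 1)·δ²·φ(δ⁻²), and (ii) ∑_{k=1}^m min(λ_k⁻¹, δ²) ≤ (c_γ + 1)·δ²·F̄(δ⁻²), where λ_k⁻¹ := +∞ when λ_k = 0 (so min(λ_k⁻¹, δ²) = δ² in that case). -/

import Mathlib

open MeasureTheory Finset
open scoped ENNReal NNReal

noncomputable section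

/-- Sample space for one observation: a pair of vertices `(X, X')` and a response `Y`. -/
abbrev Obs (m : ℕ) := Fin m × Fin m × ℝ

/-- Squared Hilbert–Schmidt (Frobenius) norm of a kernel. -/
def hsNormSq {m : ℕ} (S : Matrix (Fin m) (Fin m) ℝ) : ℝ := ∑ u, ∑ v, (S u v) ^ 2

/-- Squared `L₂(Π²)` norm: `‖S‖²_{L₂(Π²)} = m⁻² ‖S‖₂²`. -/
def l2PiSq {m : ℕ} (S : Matrix (Fin m) (Fin m) ℝ) : ℝ := hsNormSq S / (m : ℝ) ^ 2

/-- Squared Sobolev (Hilbert–Schmidt) norm `‖W^{1/2}S‖₂² = ∑ₖ λₖ ‖S φₖ‖²`,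
expressed through the eigendata `(lam, φ)` of `W` (indexed by `1,…,m`). -/
def sobolevHSSq {m : ℕ} (lam : ℕ → ℝ) (φ : ℕ → Fin m → ℝ)
    (S : Matrix (Fin m) (Fin m) ℝ) : ℝ :=
  ∑ k ∈ Finset.Icc 1 m, lam k * ∑ u, (S.mulVec (φ k) u) ^ 2

/-- `φ₁,…,φ_m` are orthonormal in `ℝ^V` (Euclidean inner product). -/
def OrthonormalFamily (m : ℕ) (φ : ℕ → Fin m → ℝ) : Prop :=
  ∀ j ∈ Finset.Icc 1 m, ∀ k ∈ Finset.Icc 1 m,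
    (∑ v, φ j v * φ k v) = if j = k then (1 : ℝ) else 0

/-- Eigendata of the positive semidefinite kernel `W`: orthonormal eigenfunctions `φ`,
nonnegative nondecreasing eigenvalues `lam` (indexed by `1,…,m`), `k0` the smallest index
of a positive eigenvalue, and `λ_{k+1} ≤ c·λ_k` for `k ≥ k0`. -/
structure IsEigenData (m : ℕ) (c : ℝ) (lam : ℕ → ℝ) (φ : ℕ → Fin m → ℝ) (k0 : ℕ) : Prop where
  orth : OrthonormalFamily m φ
  nonneg : ∀ k ∈ Finset.Icc 1 m, 0 ≤ lam k
  mono : ∀ k l : ℕ, 1 ≤ k → k ≤ l → l ≤ m → lam k ≤ lam l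
  k0_mem : 1 ≤ k0 ∧ k0 ≤ m ∧ 0 < lam k0
  k0_min : ∀ k ∈ Finset.Icc 1 m, 0 < lam k → k0 ≤ k
  ratio : ∀ k : ℕ, k0 ≤ k → k + 1 ≤ m → lam (k + 1) ≤ c * lam k

/-- The design `(X, X')` is uniformly distributed on `V × V`. -/
def UniformDesign (m : ℕ) (P : Measure (Obs m)) : Prop :=
  ∀ u v : Fin m, P {z : Obs m | z.1 = u ∧ z.2.1 = v} = ((m : ℝ≥0∞) ^ 2)⁻¹

/-- The regression kernel `S_P(u,v) = m²·E_P[Y·1{X=u, X'=v}] = E_P(Y | X=u, X'=v)`. -/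
def regKernel (m : ℕ) (P : Measure (Obs m)) : Matrix (Fin m) (Fin m) ℝ :=
  Matrix.of fun u v =>
    (m : ℝ) ^ 2 * ∫ z : Obs m, (if z.1 = u ∧ z.2.1 = v then z.2.2 else 0) ∂P

/-- Membership in the class `𝒫_{r,ρ,a}` of sampling distributions. -/
def MemP (m : ℕ) (r : ℕ) (ρ a : ℝ) (lam : ℕ → ℝ) (φ : ℕ → Fin m → ℝ)
    (P : Measure (Obs m)) : Prop :=
  IsProbabilityMeasure P ∧ UniformDesign m P ∧ (∀ᵐ z ∂P, |z.2.2| ≤ a) ∧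
    (regKernel m P).IsSymm ∧ (regKernel m P).rank ≤ r ∧
    sobolevHSSq lam φ (regKernel m P) ≤ ρ ^ 2 * (m : ℝ) ^ 2


/-- Squared norm of the orthogonal projection of `x` onto the support (= range, for a
symmetric matrix) of `S`. -/
def projSuppNormSq {m : ℕ} (S : Matrix (Fin m) (Fin m) ℝ) (x : Fin m → ℝ) : ℝ :=
  ‖(Submodule.orthogonalProjection (LinearMap.range (Matrix.toEuclideanLin S))
      ((EuclideanSpace.equiv (Fin m) ℝ).symm x) : EuclideanSpace ℝ (Fin m))‖ ^ 2

/-- The coherence function `φ(S;t) := ∑_{λ_j ≤ t} ‖P_L φ_j‖²`, `L = supp(S)`. -/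
def cohFn {m : ℕ} (lam : ℕ → ℝ) (φ : ℕ → Fin m → ℝ) (S : Matrix (Fin m) (Fin m) ℝ)
    (t : ℝ) : ℝ :=
  ∑ j ∈ (Finset.Icc 1 m).filter fun j => lam j ≤ t, projSuppNormSq S (φ j)

/-- The regularized coherence function
`φ̄(S;t) := sup_{0 < σ ≤ t} F̄(σ)·sup_{σ' ≥ σ} φ(S;σ')/F̄(σ')`. -/
def cohBar {m : ℕ} (lam : ℕ → ℝ) (φ : ℕ → Fin m → ℝ) (Fbar : ℝ → ℝ)
    (S : Matrix (Fin m) (Fin m) ℝ) (t : ℝ) : ℝ :=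
  sSup ((fun σ => Fbar σ *
      sSup ((fun σ' => cohFn lam φ S σ' / Fbar σ') '' Set.Ici σ)) '' Set.Ioc 0 t)

/-- `φ̄(S; ε̄⁻¹)`, with the convention `φ̄(S; +∞) := rank S` when `ε̄ = 0`. -/
def cohBarInv {m : ℕ} (lam : ℕ → ℝ) (φ : ℕ → Fin m → ℝ) (Fbar : ℝ → ℝ)
    (S : Matrix (Fin m) (Fin m) ℝ) (ebar : ℝ) : ℝ :=
  if ebar = 0 then (S.rank : ℝ) else cohBar lam φ Fbar S ebar⁻¹

/-- The nuclear norm of a symmetric matrix: the sum of absolute values of its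
eigenvalues. -/
def nuclearNorm {m : ℕ} (S : Matrix (Fin m) (Fin m) ℝ) : ℝ :=
  if h : S.IsHermitian then ∑ i, |h.eigenvalues i| else 0

/-- The spectral function `F(t) := #{j : λ_j ≤ t}`. -/
def specFn (m : ℕ) (lam : ℕ → ℝ) (t : ℝ) : ℕ :=
  ((Finset.Icc 1 m).filter fun j => lam j ≤ t).card

/-- `F̄` is a regularized majorant of the spectral function `F`: nondecreasing,
`F ≤ F̄`, `t ↦ F̄(t)/t` nonincreasing, `∫_t^∞ F̄(s)s⁻² ds ≤ γ⁻¹ F̄(t)/t`, and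
`F̄(t) = m` for `t ≥ λ_m`. -/
structure IsSpectralMajorant (m : ℕ) (γ : ℝ) (lam : ℕ → ℝ) (Fbar : ℝ → ℝ) : Prop where
  pos : ∀ t : ℝ, 0 < t → 0 < Fbar t
  mono : ∀ s t : ℝ, 0 < s → s ≤ t → Fbar s ≤ Fbar t
  majorant : ∀ t : ℝ, 0 < t → (specFn m lam t : ℝ) ≤ Fbar t
  ratio_anti : ∀ s t : ℝ, 0 < s → s ≤ t → Fbar t / t ≤ Fbar s / s
  integral : ∀ t : ℝ, 0 < t → (∫ s in Set.Ioi t, Fbar s / s ^ 2) ≤ γ⁻¹ * Fbar t / t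
  top : ∀ t : ℝ, lam m ≤ t → Fbar t = m

/-- The quantity `t_{n,m} = t + 3 log(2 log₂ n + ½ log₂(λ_m/λ̃) + 2)`. -/
def tnm (n m : ℕ) (t lamTilde : ℝ) (lam : ℕ → ℝ) : ℝ :=
  t + 3 * Real.log (2 * Real.logb 2 n + (1 / 2) * Real.logb 2 (lam m / lamTilde) + 2)

/-- `(μ, ψ)` is a spectral representation `S = ∑ᵢ μᵢ (ψᵢ ⊗ ψᵢ)` of the symmetric
kernel `S`, with `ψ₁,…,ψ_m` orthonormal. -/
def SpectralRep (m : ℕ) (S : Matrix (Fin m) (Fin m) ℝ) (μ : ℕ → ℝ)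
    (ψ : ℕ → Fin m → ℝ) : Prop :=
  OrthonormalFamily m ψ ∧
    S = Matrix.of fun u v => ∑ i ∈ Finset.Icc 1 m, μ i * ψ i u * ψ i v

/-- `‖P_L x‖²` for `L = supp(S) = l.s.{ψᵢ : μᵢ ≠ 0}`, computed from the spectral data. -/
def projNormSqData {m : ℕ} (μ : ℕ → ℝ) (ψ : ℕ → Fin m → ℝ) (x : Fin m → ℝ) : ℝ :=
  ∑ i ∈ (Finset.Icc 1 m).filter fun i => μ i ≠ 0, (∑ v, x v * ψ i v) ^ 2

/-- The coherence function `φ(S;t) := ∑_{λ_j ≤ t} ‖P_L φ_j‖²`, from the spectral data. -/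
def cohFnData {m : ℕ} (lam : ℕ → ℝ) (φ : ℕ → Fin m → ℝ) (μ : ℕ → ℝ)
    (ψ : ℕ → Fin m → ℝ) (t : ℝ) : ℝ :=
  ∑ j ∈ (Finset.Icc 1 m).filter fun j => lam j ≤ t, projNormSqData μ ψ (φ j)

/-- Membership of `φfun` in the class `Ψ_{S,W}`: `φfun` is nonnegative and nondecreasing
on `(0,∞)`, dominates the coherence function `φ(S;·)`, and `φfun/F̄` is nonincreasing. -/
def MemPsi {m : ℕ} (lam : ℕ → ℝ) (φ : ℕ → Fin m → ℝ) (Fbar : ℝ → ℝ) (μ : ℕ → ℝ)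
    (ψ : ℕ → Fin m → ℝ) (φfun : ℝ → ℝ) : Prop :=
  (∀ t : ℝ, 0 < t → 0 ≤ φfun t) ∧
  (∀ s t : ℝ, 0 < s → s ≤ t → φfun s ≤ φfun t) ∧
  (∀ t : ℝ, 0 < t → cohFnData lam φ μ ψ t ≤ φfun t) ∧
  (∀ s t : ℝ, 0 < s → s ≤ t → φfun t / Fbar t ≤ φfun s / Fbar s)

/-- `min(λ_k⁻¹, δ²)`, with the convention `λ_k⁻¹ = +∞` (so the minimum is `δ²`)
when `λ_k = 0`. -/
def minInvSq (lam : ℕ → ℝ) (k : ℕ) (δ : ℝ) : ℝ :=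
  if lam k = 0 then δ ^ 2 else min (lam k)⁻¹ (δ ^ 2)

/-!
For `T > 0` the truncated inverse is a layer-cake integral,
`min (λ⁻¹, T⁻¹) = (max λ T)⁻¹ = ∫_T^∞ 1{λ ≤ s} s⁻² ds`. Summing against nonnegative weights `wₖ`
gives `∑ₖ min (λₖ⁻¹, T⁻¹) wₖ = ∫_T^∞ A(s) s⁻² ds`, where `A(s) := ∑_{λₖ ≤ s} wₖ`. If `A ≤ G` and
`G / F̄` is nonincreasing, then `A(s) ≤ (G(T) / F̄(T)) F̄(s)` for `s ≥ T`, and the integral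
condition on `F̄` bounds the sum by `γ⁻¹ T⁻¹ G(T)`. Take `T = δ⁻²`; the weights `‖P_L φₖ‖²` with
`G = φ` give the first bound and unit weights with `G = F̄` the second.
-/

section InverseSquare

variable {T : ℝ}

theorem rpow_neg_two_eqOn_inv_sq (hT : 0 < T) :
    Set.EqOn (fun t : ℝ => t ^ (-2 : ℝ)) (fun t => (t ^ 2)⁻¹) (Set.Ioi T) := fun t ht => by
  simp only [Real.rpow_neg (hT.trans ht).le, Real.rpow_two]

theorem integrableOn_Ioi_inv_sq (hT : 0 < T) :
    IntegrableOn (fun t : ℝ => (t ^ 2)⁻¹) (Set.Ioi T) :=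
  (integrableOn_Ioi_rpow_of_lt (by norm_num) hT).congr_fun (rpow_neg_two_eqOn_inv_sq hT)
    measurableSet_Ioi

theorem integral_Ioi_inv_sq (hT : 0 < T) : ∫ t in Set.Ioi T, (t ^ 2)⁻¹ = T⁻¹ := by
  rw [← setIntegral_congr_fun measurableSet_Ioi (rpow_neg_two_eqOn_inv_sq hT),
    integral_Ioi_rpow_of_lt (by norm_num) hT]
  norm_num [Real.rpow_neg_one]

theorem integral_Ioi_indicator_Ici_inv_sq (hT : 0 < T) (x : ℝ) :
    ∫ t in Set.Ioi T, (Set.Ici x).indicator (fun t => (t ^ 2)⁻¹) t = (max x T)⁻¹ := by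
  rw [← integral_Ici_eq_integral_Ioi, setIntegral_indicator measurableSet_Ici, Set.Ici_inter_Ici,
    integral_Ici_eq_integral_Ioi, integral_Ioi_inv_sq (lt_sup_of_lt_left hT), sup_comm]

theorem integrableOn_Ioi_indicator_Ici_inv_sq (hT : 0 < T) (x : ℝ) :
    IntegrableOn ((Set.Ici x).indicator fun t => (t ^ 2)⁻¹) (Set.Ioi T) :=
  (integrableOn_Ioi_inv_sq hT).indicator measurableSet_Ici

theorem integrableOn_Ioi_div_sq_of_monotoneOn_of_bounded {f : ℝ → ℝ} {M : ℝ} (hT : 0 < T)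
    (hf : MonotoneOn f (Set.Ioi T)) (hM : ∀ t ∈ Set.Ioi T, ‖f t‖ ≤ M) :
    IntegrableOn (fun t => f t / t ^ 2) (Set.Ioi T) :=
  (integrableOn_Ioi_inv_sq hT).bdd_mul
    (aemeasurable_restrict_of_monotoneOn measurableSet_Ioi hf).aestronglyMeasurable
    (ae_restrict_of_forall_mem measurableSet_Ioi hM)

end InverseSquare

section LayerCake

variable {ι : Type*} (s : Finset ι) (x w : ι → ℝ) {T : ℝ}

theorem sum_filter_le_div_sq_eq_sum_indicator (t : ℝ) :
    (∑ i ∈ s with x i ≤ t, w i) / t ^ 2 =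
      ∑ i ∈ s, (Set.Ici (x i)).indicator (fun t => (t ^ 2)⁻¹) t * w i := by
  simp only [div_eq_inv_mul, sum_filter, mul_sum, mul_ite, mul_zero, Set.indicator_apply,
    Set.mem_Ici, ite_mul, zero_mul]

theorem integrableOn_Ioi_sum_filter_le_div_sq (hT : 0 < T) :
    IntegrableOn (fun t => (∑ i ∈ s with x i ≤ t, w i) / t ^ 2) (Set.Ioi T) := by
  simp only [sum_filter_le_div_sq_eq_sum_indicator]
  exact integrable_finsetSum _ fun i _ => (integrableOn_Ioi_indicator_Ici_inv_sq hT _).mul_const _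

theorem integral_Ioi_sum_filter_le_div_sq (hT : 0 < T) :
    ∫ t in Set.Ioi T, (∑ i ∈ s with x i ≤ t, w i) / t ^ 2 = ∑ i ∈ s, (max (x i) T)⁻¹ * w i := by
  simp only [sum_filter_le_div_sq_eq_sum_indicator]
  rw [integral_finsetSum _ fun i _ => (integrableOn_Ioi_indicator_Ici_inv_sq hT _).mul_const _]
  simp only [integral_mul_const, integral_Ioi_indicator_Ici_inv_sq hT]

variable {s x w}

theorem sum_inv_max_mul_le_mul_integral {f : ℝ → ℝ} {C : ℝ} (hT : 0 < T)
    (hf : IntegrableOn (fun t => f t / t ^ 2) (Set.Ioi T))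
    (hw : ∀ t ∈ Set.Ioi T, ∑ i ∈ s with x i ≤ t, w i ≤ C * f t) :
    ∑ i ∈ s, (max (x i) T)⁻¹ * w i ≤ C * ∫ t in Set.Ioi T, f t / t ^ 2 := by
  rw [← integral_Ioi_sum_filter_le_div_sq s x w hT, ← integral_const_mul]
  refine setIntegral_mono_on (integrableOn_Ioi_sum_filter_le_div_sq s x w hT) (hf.const_mul C)
    measurableSet_Ioi fun t ht => ?_
  rw [← mul_div_assoc]
  exact div_le_div_of_nonneg_right (hw t ht) (sq_nonneg t)

end LayerCake

theorem minInvSq_le_inv_max (lam : ℕ → ℝ) (k : ℕ) (δ : ℝ) :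
    minInvSq lam k δ ≤ (max (lam k) (δ ^ 2)⁻¹)⁻¹ := by
  unfold minInvSq
  split_ifs with hzero
  · rw [hzero, max_eq_right (inv_nonneg.2 (sq_nonneg δ)), inv_inv]
  · rcases le_total (lam k) (δ ^ 2)⁻¹ with hle | hge
    · rw [max_eq_right hle, inv_inv]
      exact min_le_right _ _
    · rw [max_eq_left hge]
      exact min_le_left _ _

theorem projNormSqData_nonneg {m : ℕ} (μ : ℕ → ℝ) (ψ : ℕ → Fin m → ℝ) (x : Fin m → ℝ) :
    0 ≤ projNormSqData μ ψ x :=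
  sum_nonneg fun _ _ => sq_nonneg _

namespace IsSpectralMajorant

variable {m : ℕ} {γ : ℝ} {lam : ℕ → ℝ} {Fbar : ℝ → ℝ}

theorem le_card (hF : IsSpectralMajorant m γ lam Fbar) {t : ℝ} (ht : 0 < t) : Fbar t ≤ m :=
  (hF.mono t (max t (lam m)) ht (le_max_left _ _)).trans_eq (hF.top _ (le_max_right _ _))

theorem integrableOn_div_sq (hF : IsSpectralMajorant m γ lam Fbar) {T : ℝ} (hT : 0 < T) :
    IntegrableOn (fun t => Fbar t / t ^ 2) (Set.Ioi T) := by
  refine integrableOn_Ioi_div_sq_of_monotoneOn_of_bounded (M := m) hT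
    (fun s hs t _ hst => hF.mono s t (hT.trans hs) hst) fun t ht => ?_
  have ht0 : 0 < t := hT.trans ht
  rw [Real.norm_of_nonneg (hF.pos t ht0).le]
  exact hF.le_card ht0

theorem sum_inv_max_mul_le (hF : IsSpectralMajorant m γ lam Fbar) {ι : Type*} {s : Finset ι}
    {x w : ι → ℝ} {G : ℝ → ℝ} (hw : ∀ i ∈ s, 0 ≤ w i)
    (hG : ∀ t, 0 < t → ∑ i ∈ s with x i ≤ t, w i ≤ G t)
    (hGF : ∀ a b, 0 < a → a ≤ b → G b / Fbar b ≤ G a / Fbar a) {T : ℝ} (hT : 0 < T) :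
    ∑ i ∈ s, (max (x i) T)⁻¹ * w i ≤ γ⁻¹ * T⁻¹ * G T := by
  have hFT : 0 < Fbar T := hF.pos T hT
  have hGT : 0 ≤ G T := (sum_nonneg fun i hi => hw i (mem_filter.1 hi).1).trans (hG T hT)
  have hbound : ∀ t ∈ Set.Ioi T, ∑ i ∈ s with x i ≤ t, w i ≤ G T / Fbar T * Fbar t :=
    fun t ht => (hG t (hT.trans ht)).trans <|
      (div_le_iff₀ (hF.pos t (hT.trans ht))).1 (hGF T t hT (le_of_lt ht))
  calc ∑ i ∈ s, (max (x i) T)⁻¹ * w i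
      ≤ G T / Fbar T * ∫ t in Set.Ioi T, Fbar t / t ^ 2 :=
        sum_inv_max_mul_le_mul_integral hT (hF.integrableOn_div_sq hT) hbound
    _ ≤ G T / Fbar T * (γ⁻¹ * Fbar T / T) :=
        mul_le_mul_of_nonneg_left (hF.integral T hT) (div_nonneg hGT hFT.le)
    _ = γ⁻¹ * T⁻¹ * G T := by field_simp

theorem sum_minInvSq_mul_le (hF : IsSpectralMajorant m γ lam Fbar) {s : Finset ℕ} {w : ℕ → ℝ}
    {G : ℝ → ℝ} (hw : ∀ k ∈ s, 0 ≤ w k)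
    (hG : ∀ t, 0 < t → ∑ k ∈ s with lam k ≤ t, w k ≤ G t)
    (hGF : ∀ a b, 0 < a → a ≤ b → G b / Fbar b ≤ G a / Fbar a) {δ : ℝ} (hδ : 0 < δ) :
    ∑ k ∈ s, minInvSq lam k δ * w k ≤ γ⁻¹ * δ ^ 2 * G (δ ^ 2)⁻¹ := by
  calc ∑ k ∈ s, minInvSq lam k δ * w k
      ≤ ∑ k ∈ s, (max (lam k) (δ ^ 2)⁻¹)⁻¹ * w k :=
        sum_le_sum fun k hk => mul_le_mul_of_nonneg_right (minInvSq_le_inv_max lam k δ) (hw k hk)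
    _ ≤ γ⁻¹ * (δ ^ 2)⁻¹⁻¹ * G (δ ^ 2)⁻¹ := hF.sum_inv_max_mul_le hw hG hGF (by positivity)
    _ = γ⁻¹ * δ ^ 2 * G (δ ^ 2)⁻¹ := by rw [inv_inv]

theorem sum_minInvSq_le (hF : IsSpectralMajorant m γ lam Fbar) {δ : ℝ} (hδ : 0 < δ) :
    ∑ k ∈ Icc 1 m, minInvSq lam k δ ≤ γ⁻¹ * δ ^ 2 * Fbar (δ ^ 2)⁻¹ := by
  have hcount : ∀ t, 0 < t → ∑ k ∈ Icc 1 m with lam k ≤ t, (1 : ℝ) ≤ Fbar t := fun t ht => by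
    simpa only [specFn, sum_const, nsmul_one] using hF.majorant t ht
  have hratio : ∀ a b, 0 < a → a ≤ b → Fbar b / Fbar b ≤ Fbar a / Fbar a := fun a b ha hab => by
    rw [div_self (hF.pos a ha).ne', div_self (hF.pos b (ha.trans_le hab)).ne']
  simpa only [mul_one] using hF.sum_minInvSq_mul_le (fun _ _ => zero_le_one) hcount hratio hδ

end IsSpectralMajorant

theorem truncated_inverse_eigenvalue_sums_general {m : ℕ} {γ : ℝ} {lam : ℕ → ℝ}
    {φ : ℕ → Fin m → ℝ} {Fbar : ℝ → ℝ} {μ : ℕ → ℝ} {ψ : ℕ → Fin m → ℝ} {φfun : ℝ → ℝ}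
    (hF : IsSpectralMajorant m γ lam Fbar) (hφfun : MemPsi lam φ Fbar μ ψ φfun) {δ : ℝ}
    (hδ : 0 < δ) :
    (∑ k ∈ Icc 1 m, minInvSq lam k δ * projNormSqData μ ψ (φ k)) ≤
        γ⁻¹ * δ ^ 2 * φfun (δ ^ 2)⁻¹ ∧
      (∑ k ∈ Icc 1 m, minInvSq lam k δ) ≤ γ⁻¹ * δ ^ 2 * Fbar (δ ^ 2)⁻¹ := by
  obtain ⟨-, -, hcoh, hratio⟩ := hφfun
  exact ⟨hF.sum_minInvSq_mul_le (fun k _ => projNormSqData_nonneg μ ψ (φ k)) hcoh hratio hδ,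
    hF.sum_minInvSq_le hδ⟩

/-- **Truncated inverse-eigenvalue sums.** -/
theorem truncated_inverse_eigenvalue_sums (c γ : ℝ) (hc : 1 ≤ c) (hγ0 : 0 < γ)
    (hγ1 : γ < 1) :
    ∀ (m k0 : ℕ) (lam : ℕ → ℝ) (φ : ℕ → Fin m → ℝ) (Fbar : ℝ → ℝ)
      (S : Matrix (Fin m) (Fin m) ℝ) (μ : ℕ → ℝ) (ψ : ℕ → Fin m → ℝ) (φfun : ℝ → ℝ),
      1 ≤ m →
      IsEigenData m c lam φ k0 →
      IsSpectralMajorant m γ lam Fbar →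
      SpectralRep m S μ ψ →
      MemPsi lam φ Fbar μ ψ φfun →
      ∀ δ : ℝ, 0 < δ →
        (∑ k ∈ Finset.Icc 1 m, minInvSq lam k δ * projNormSqData μ ψ (φ k)) ≤
          ((c + γ) / γ + 1) * δ ^ 2 * φfun ((δ ^ 2)⁻¹) ∧
        (∑ k ∈ Finset.Icc 1 m, minInvSq lam k δ) ≤
          ((c + γ) / γ + 1) * δ ^ 2 * Fbar ((δ ^ 2)⁻¹) := by
  intro m _ lam φ Fbar _ μ ψ φfun _ _ hF _ hφfun δ hδ
  have hT : 0 < (δ ^ 2)⁻¹ := by positivity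
  have hφ0 : 0 ≤ φfun (δ ^ 2)⁻¹ := hφfun.1 _ hT
  have hF0 : 0 ≤ Fbar (δ ^ 2)⁻¹ := (hF.pos _ hT).le
  have hconst : γ⁻¹ ≤ (c + γ) / γ + 1 := by
    rw [inv_eq_one_div, div_add_one hγ0.ne']
    gcongr
    linarith
  obtain ⟨hcoh, hcount⟩ := truncated_inverse_eigenvalue_sums_general hF hφfun hδ
  exact ⟨hcoh.trans (by gcongr), hcount.trans (by gcongr)⟩

end
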